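/- Let (R, 𝔪) be a commutative Artinian local ring with residue field k = R/𝔪. For any stability condition σ = (Z, P) on D^b(R) = D^b(mod R) having the Jordan–Hölder property, there exists φ₀ ∈ ℝ such that every nonzero finitely generated R-module, viewed as an object of D^b(mod R) concentrated in degree 0, lies in P(φ₀); in particular, every nonzero finitely generated R-module is σ-semistable and all of them have the same phase. -/

import Mathlib

open CategoryTheory Limits Pretriangulated DerivedCategory

universe w v u

section StabilityDefs

variable {D : Type*} [Category D] [HasZeroObject D] [Preadditive D] [HasShift D ℤ]
  [∀ n : ℤ, (CategoryTheory.shiftFunctor D n).Additive] [Pretriangulated D]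

/-- An object `E` has a Harder–Narasimhan filtration with respect to the slicing `P`:
a finite sequence `0 = X₀ → X₁ → ⋯ → Xₙ ≅ E` such that the cone of each
`X_{i-1} → X_i` is a nonzero object of `P(φ_i)`, with `φ₁ > φ₂ > ⋯ > φₙ`. -/
def HasHNFiltration (P : ℝ → Set D) (E : D) : Prop :=
  ∃ (n : ℕ) (X : Fin (n + 1) → D) (f : ∀ i : Fin n, X i.castSucc ⟶ X i.succ)
    (φ : Fin n → ℝ), IsZero (X 0) ∧ Nonempty (X (Fin.last n) ≅ E) ∧ StrictAnti φ ∧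
    ∀ i : Fin n, ∃ (A : D) (g : X i.succ ⟶ A) (h : A ⟶ (X i.castSucc)⟦(1 : ℤ)⟧),
      (Triangle.mk (f i) g h ∈ distTriang D) ∧ ¬ IsZero A ∧ A ∈ P (φ i)

/-- A (Bridgeland) stability condition on the full triangulated subcategory of `D`
determined by the collection of objects `B`. It consists of a central charge `Z`,
additive on distinguished triangles of the subcategory, and of strictly full additive
subcategories `P φ ⊆ B` for `φ ∈ ℝ` satisfying the axioms (s1)–(s4). -/
structure StabilityConditionOn (B : Set D) where
  /-- the central charge -/
  Z : D → ℂ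
  /-- the slicing -/
  P : ℝ → Set D
  P_le : ∀ φ : ℝ, P φ ⊆ B
  -- each `P φ` is a strictly full additive subcategory
  P_iso : ∀ (φ : ℝ) (X Y : D), X ∈ P φ → Nonempty (X ≅ Y) → Y ∈ P φ
  P_zero : ∀ (φ : ℝ) (X : D), IsZero X → X ∈ P φ
  P_biprod : ∀ (φ : ℝ) (X Y : D) (b : BinaryBicone X Y), b.IsBilimit →
    X ∈ P φ → Y ∈ P φ → b.pt ∈ P φ
  -- `Z` is additive on distinguished triangles of the subcategory
  Z_add : ∀ T ∈ distTriang D, T.obj₁ ∈ B → Triangle.obj₂ T ∈ B → T.obj₃ ∈ B →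
    Z (Triangle.obj₂ T) = Z T.obj₁ + Z T.obj₃
  s1 : ∀ (φ : ℝ) (E : D), E ∈ P φ → ¬ IsZero E →
    ∃ m : ℝ, 0 < m ∧ Z E = (m : ℂ) * Complex.exp ((Real.pi : ℂ) * Complex.I * (φ : ℂ))
  s2 : ∀ (φ ψ : ℝ), ψ < φ → ∀ E ∈ P φ, ∀ F ∈ P ψ, ∀ f : E ⟶ F, f = 0
  s3 : ∀ (φ : ℝ) (X : D), X ∈ P (φ + 1) ↔ ∃ Y ∈ P φ, Nonempty (X ≅ Y⟦(1 : ℤ)⟧)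
  s4 : ∀ E ∈ B, ¬ IsZero E → HasHNFiltration P E

variable {B : Set D}

/-- An object is `σ`-semistable of phase `φ` if it is a nonzero object of `P φ`. -/
def StabilityConditionOn.IsSemistable (σ : StabilityConditionOn B) (φ : ℝ) (E : D) : Prop :=
  E ∈ σ.P φ ∧ ¬ IsZero E

/-- An object is `σ`-stable if it is `σ`-semistable of some phase `φ` and is simple in
`P φ`: in any distinguished triangle `A ⟶ E ⟶ C ⟶ A[1]` with `A, C ∈ P φ`, either `A`
or `C` is zero. -/
def StabilityConditionOn.IsStable (σ : StabilityConditionOn B) (φ : ℝ) (E : D) : Prop :=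
  σ.IsSemistable φ E ∧
  ∀ (A C : D) (f : A ⟶ E) (g : E ⟶ C) (h : C ⟶ A⟦(1 : ℤ)⟧),
    (Triangle.mk f g h ∈ distTriang D) → A ∈ σ.P φ → C ∈ σ.P φ → IsZero A ∨ IsZero C

/-- `σ` has the Jordan–Hölder property: every `σ`-semistable object of phase `φ` has a
finite filtration whose successive cones are `σ`-stable of phase `φ`. -/
def StabilityConditionOn.HasJHProperty (σ : StabilityConditionOn B) : Prop :=
  ∀ (φ : ℝ) (E : D), E ∈ σ.P φ → ¬ IsZero E →
    ∃ (n : ℕ) (X : Fin (n + 1) → D) (f : ∀ i : Fin n, X i.castSucc ⟶ X i.succ),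
      IsZero (X 0) ∧ Nonempty (X (Fin.last n) ≅ E) ∧
      ∀ i : Fin n, ∃ (A : D) (g : X i.succ ⟶ A) (h : A ⟶ (X i.castSucc)⟦(1 : ℤ)⟧),
        (Triangle.mk (f i) g h ∈ distTriang D) ∧ σ.IsStable φ A

end StabilityDefs

noncomputable section

variable (A : Type u) [CommRing A] [HasDerivedCategory.{w} (ModuleCat.{u} A)]

/-- The objects of the derived category of `A`-modules belonging to `D^b(mod A)`, i.e.
those with only finitely many nonzero cohomology modules, all of them finitely
generated. -/
def DbCoh : Set (DerivedCategory (ModuleCat.{u} A)) :=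
  {E | (∃ a b : ℤ, ∀ i : ℤ, (i < a ∨ b < i) →
          IsZero ((DerivedCategory.homologyFunctor (ModuleCat.{u} A) i).obj E)) ∧
       (∀ i : ℤ, Module.Finite A
          ((DerivedCategory.homologyFunctor (ModuleCat.{u} A) i).obj E))}

/-- An `A`-module viewed as an object of the derived category, placed in degree `0`. -/
abbrev degZero (M : ModuleCat.{u} A) : DerivedCategory (ModuleCat.{u} A) :=
  (DerivedCategory.singleFunctor (ModuleCat.{u} A) 0).obj M

end

/-!
Over an Artinian local ring a nonzero finitely generated module surjects onto the residue field `k`,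
and `k` embeds into every nonzero module. Hence if `n` is both the top degree of `E` and the bottom
degree of `F`, there is a nonzero map `E ⟶ τ≥n E ⟶ k[-n] ⟶ τ≤n F ⟶ F`. Applied to shifts of
semistable objects, (s2) turns this into an inequality between phases: a semistable object lies in a
single degree `n`, and phase + `n` is a constant `φ₀`. The degrees of the Harder–Narasimhan factors
therefore strictly increase, so the last triangle of the filtration is a truncation triangle.
For an object lying in a single degree that triangle is trivial, so the object is semistable.
-/

open Triangulated

section TStructure

variable {D : Type*} [Category D] [HasZeroObject D] [Preadditive D] [HasShift D ℤ]
  [∀ n : ℤ, (CategoryTheory.shiftFunctor D n).Additive] [Pretriangulated D] (t : TStructure D)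

/-- The degree of the highest nonzero `t`-cohomology object of `E`, as a relation between `E` and
`n`; it holds for no `n` when `E` is zero or is not bounded above. -/
def IsTopDegree (E : D) (n : ℤ) : Prop := IsLeast {m | t.IsLE E m} n

/-- The degree of the lowest nonzero `t`-cohomology object of `E`, as a relation between `E` and
`n`; it holds for no `n` when `E` is zero or is not bounded below. -/
def IsBottomDegree (E : D) (n : ℤ) : Prop := IsGreatest {m | t.IsGE E m} n

variable {t}

lemma exists_isTopDegree {E : D} (hE : t.bounded E) (hE₀ : ¬ IsZero E) :
    ∃ n, IsTopDegree t E n := by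
  obtain ⟨⟨a, _⟩, b, hb⟩ := hE
  obtain ⟨n, hn, hmin⟩ := Int.exists_least_of_bdd (P := fun m => t.IsLE E m)
    ⟨a, fun m _ => not_lt.1 fun hma => hE₀ (t.isZero E m a hma)⟩ ⟨b, hb⟩
  exact ⟨n, hn, hmin⟩

lemma exists_isBottomDegree {E : D} (hE : t.bounded E) (hE₀ : ¬ IsZero E) :
    ∃ n, IsBottomDegree t E n := by
  obtain ⟨⟨a, ha⟩, b, _⟩ := hE
  obtain ⟨n, hn, hmax⟩ := Int.exists_greatest_of_bdd (P := fun m => t.IsGE E m)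
    ⟨b, fun m _ => not_lt.1 fun hbm => hE₀ (t.isZero E b m hbm)⟩ ⟨a, ha⟩
  exact ⟨n, hn, hmax⟩

lemma IsTopDegree.not_isZero_truncGE {E : D} {n : ℤ} (h : IsTopDegree t E n) :
    ¬ IsZero ((t.truncGE n).obj E) := fun hzero => by
  have hle : n ≤ n - 1 := h.2 ((t.isLE_iff_isZero_truncGE_obj (n - 1) n (by lia) E).2 hzero)
  lia

lemma IsBottomDegree.not_isZero_truncLE {E : D} {n : ℤ} (h : IsBottomDegree t E n) :
    ¬ IsZero ((t.truncLE n).obj E) := fun hzero => by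
  have hle : n + 1 ≤ n := h.2 ((t.isGE_iff_isZero_truncLE_obj n (n + 1) rfl E).2 hzero)
  lia

lemma IsBottomDegree.shift {E : D} {n : ℤ} (h : IsBottomDegree t E n) (a n' : ℤ)
    (hn' : a + n' = n) : IsBottomDegree t (E⟦a⟧) n' := by
  refine ⟨(t.isGE_shift_iff E n a n').2 h.1, fun m hm => ?_⟩
  have hle : m + a ≤ n := h.2 ((t.isGE_shift_iff E (m + a) a m).1 hm)
  lia

lemma truncGEπ_comp_comp_truncLEι_ne_zero [IsTriangulated D] {E F : D} {n : ℤ} (hE : t.IsLE E n)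
    (hF : t.IsGE F n) {g : (t.truncGE n).obj E ⟶ (t.truncLE n).obj F} (hg : g ≠ 0) :
    (t.truncGEπ n).app E ≫ g ≫ (t.truncLEι n).app F ≠ 0 := by
  intro hzero
  have hE' : t.IsLE ((𝟭 D).obj E) n := hE
  have hπg : (t.truncGEπ n).app E ≫ g = 0 :=
    t.to_truncLE_obj_ext (by rw [Category.assoc, hzero, zero_comp])
  exact hg (t.from_truncGE_obj_ext (by rw [hπg, comp_zero]))

section TruncationTriangle

variable {T : Triangle D} {n : ℤ}

lemma isZero_obj₁_of_isLE_of_isGE (hT : T ∈ distTriang D) (h₁ : t.IsLE T.obj₁ (n - 1))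
    (h₂ : t.IsGE T.obj₂ n) (h₃ : t.IsGE T.obj₃ n) : IsZero T.obj₁ := by
  have h₃' : t.IsGE (T.obj₃⟦(-1 : ℤ)⟧) (n + 1) := t.isGE_shift T.obj₃ n (-1) (n + 1)
  have h₃'' : t.IsGE (T.obj₃⟦(-1 : ℤ)⟧) n := t.isGE_of_ge _ n (n + 1)
  have h₁' : t.IsGE T.obj₁ n := t.isGE₂ _ (inv_rot_of_distTriang T hT) n h₃'' h₂
  exact t.isZero T.obj₁ (n - 1) n

lemma isZero_obj₃_of_isLE_of_isGE (hT : T ∈ distTriang D) (h₁ : t.IsLE T.obj₁ (n - 1))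
    (h₂ : t.IsLE T.obj₂ (n - 1)) (h₃ : t.IsGE T.obj₃ n) : IsZero T.obj₃ := by
  have h₁' : t.IsLE (T.obj₁⟦(1 : ℤ)⟧) (n - 2) := t.isLE_shift T.obj₁ (n - 1) 1 (n - 2)
  have h₁'' : t.IsLE (T.obj₁⟦(1 : ℤ)⟧) (n - 1) := t.isLE_of_le _ (n - 2) (n - 1)
  have h₃' : t.IsLE T.obj₃ (n - 1) := t.isLE₂ _ (rot_of_distTriang T hT) (n - 1) h₂ h₁''
  exact t.isZero T.obj₃ (n - 1) n

lemma isIso_mor₂_and_eq_of_isLE_of_isGE {m : ℤ} (hT : T ∈ distTriang D)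
    (h₁ : t.IsLE T.obj₁ (m - 1)) (h₂LE : t.IsLE T.obj₂ n) (h₂GE : t.IsGE T.obj₂ n)
    (h₃LE : t.IsLE T.obj₃ m) (h₃GE : t.IsGE T.obj₃ m) (h₃ : ¬ IsZero T.obj₃) :
    IsIso T.mor₂ ∧ m = n := by
  have hmn : m ≤ n := not_lt.1 fun hlt =>
    h₃ (isZero_obj₃_of_isLE_of_isGE hT h₁ (t.isLE_of_le _ n (m - 1)) h₃GE)
  have hiso : IsIso T.mor₂ := (Triangle.isZero₁_iff_isIso₂ T hT).1
    (isZero_obj₁_of_isLE_of_isGE hT h₁ (t.isGE_of_ge _ m n) h₃GE)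
  have hge : t.IsGE T.obj₃ n := t.isGE_of_iso (asIso T.mor₂) n
  exact ⟨hiso, hmn.antisymm (not_lt.1 fun hlt => h₃ (t.isZero T.obj₃ m n hlt))⟩

end TruncationTriangle

lemma isLE_castSucc_of_filtration {n : ℕ} {X : Fin (n + 1) → D} {A : Fin n → D}
    {f : ∀ i : Fin n, X i.castSucc ⟶ X i.succ} {g : ∀ i, X i.succ ⟶ A i}
    {h : ∀ i, A i ⟶ (X i.castSucc)⟦(1 : ℤ)⟧}
    (hT : ∀ i, Triangle.mk (f i) (g i) (h i) ∈ distTriang D) (hX₀ : IsZero (X 0)) {d : Fin n → ℤ}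
    (hd : StrictMono d) (hA : ∀ i, t.IsLE (A i) (d i)) (i : Fin n) :
    t.IsLE (X i.castSucc) (d i - 1) := by
  obtain _ | n := n
  · exact i.elim0
  induction i using Fin.induction with
  | zero => exact t.isLE_of_isZero hX₀ _
  | succ i ih =>
    have hlt : d i.castSucc < d i.succ := hd i.castSucc_lt_succ
    have hX : t.IsLE (X i.castSucc.castSucc) (d i.castSucc) :=
      t.isLE_of_le _ (d i.castSucc - 1) (d i.castSucc)
    have hX' : t.IsLE (X i.castSucc.succ) (d i.castSucc) :=
      t.isLE₂ _ (hT i.castSucc) _ hX (hA i.castSucc)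
    rw [Fin.succ_castSucc] at hX'
    exact t.isLE_of_le _ (d i.castSucc) _

end TStructure

section Slicing

variable {D : Type*} [Category D] [HasZeroObject D] [Preadditive D] [HasShift D ℤ]
  [∀ n : ℤ, (CategoryTheory.shiftFunctor D n).Additive] [Pretriangulated D]
  {t : TStructure D} {B : Set D}

lemma HasHNFiltration.exists_truncation_triangle {P : ℝ → Set D} {E : D} (hE : HasHNFiltration P E)
    (hE₀ : ¬ IsZero E) {φ₀ : ℝ}
    (hP : ∀ φ, ∀ A ∈ P φ, ¬ IsZero A → ∃ d : ℤ, t.IsLE A d ∧ t.IsGE A d ∧ φ + d = φ₀) :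
    ∃ (T : Triangle D) (φ : ℝ) (d : ℤ), T ∈ distTriang D ∧ Nonempty (T.obj₂ ≅ E) ∧
      t.IsLE T.obj₁ (d - 1) ∧ T.obj₃ ∈ P φ ∧ ¬ IsZero T.obj₃ ∧
      t.IsLE T.obj₃ d ∧ t.IsGE T.obj₃ d ∧ φ + d = φ₀ := by
  obtain ⟨n, X, f, φ, hX₀, ⟨e⟩, hφ, hA⟩ := hE
  choose A g h hT hA₀ hAP using hA
  choose d hLE hGE hd using fun i => hP _ _ (hAP i) (hA₀ i)
  have hdmono : StrictMono d := fun i j hij => by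
    have := hφ hij
    exact_mod_cast (by linarith [hd i, hd j] : (d i : ℝ) < d j)
  obtain _ | n := n
  · exact absurd (hX₀.of_iso e.symm) hE₀
  · exact ⟨_, φ (Fin.last n), d (Fin.last n), hT (Fin.last n), ⟨e⟩,
      isLE_castSucc_of_filtration hT hX₀ hdmono hLE _, hAP _, hA₀ _, hLE _, hGE _, hd _⟩

/-- Every object of `B` maps nontrivially to every object of `B` whose bottom degree is its top
degree. All constraints on phases are deduced from this property. -/
def HasTopBottomHoms (t : TStructure D) (B : Set D) : Prop :=
  ∀ ⦃E F : D⦄, E ∈ B → F ∈ B → ∀ ⦃n : ℤ⦄, IsTopDegree t E n → IsBottomDegree t F n →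
    ∃ f : E ⟶ F, f ≠ 0

namespace StabilityConditionOn

lemma shift_mem_P (σ : StabilityConditionOn B) {φ : ℝ} {E : D} (hE : E ∈ σ.P φ) (n : ℤ) :
    E⟦n⟧ ∈ σ.P (φ + n) := by
  induction n using Int.induction_on with
  | zero =>
    rw [Int.cast_zero, add_zero]
    exact σ.P_iso _ _ _ hE ⟨((shiftFunctorZero D ℤ).app E).symm⟩
  | succ n ih =>
    rw [Int.cast_add, Int.cast_one, ← add_assoc, σ.s3]
    exact ⟨_, ih, ⟨(shiftFunctorAdd D (n : ℤ) 1).app E⟩⟩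
  | pred n ih =>
    have hφ : φ + ((-(n : ℤ) : ℤ) : ℝ) = φ + ((-(n : ℤ) - 1 : ℤ) : ℝ) + 1 := by push_cast; ring
    rw [hφ, σ.s3] at ih
    obtain ⟨F, hF, ⟨e⟩⟩ := ih
    exact σ.P_iso _ _ _ hF ⟨((shiftFunctorCompIsoId D (1 : ℤ) (-1) (by lia)).app F).symm ≪≫
      (shiftFunctor D (-1 : ℤ)).mapIso e.symm ≪≫
      ((shiftFunctorAdd' D (-(n : ℤ)) (-1) (-(n : ℤ) - 1) (by lia)).app E).symm⟩

variable (σ : StabilityConditionOn B)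

lemma phase_add_top_le_phase_add_bottom (hhom : HasTopBottomHoms t B) {φ ψ : ℝ} {E F : D}
    (hE : E ∈ σ.P φ) (hF : F ∈ σ.P ψ) {a b : ℤ} (hb : IsTopDegree t E b)
    (ha : IsBottomDegree t F a) : φ + b ≤ ψ + a := by
  have hFshift : F⟦a - b⟧ ∈ σ.P (ψ + (a - b : ℤ)) := σ.shift_mem_P hF (a - b)
  have hbot : IsBottomDegree t (F⟦a - b⟧) b := ha.shift (a - b) b (sub_add_cancel a b)
  obtain ⟨f, hf⟩ := hhom (σ.P_le _ hE) (σ.P_le _ hFshift) hb hbot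
  have hphase : φ ≤ ψ + (a - b : ℤ) :=
    not_lt.1 fun hlt => hf (σ.s2 _ _ hlt _ hE _ hFshift f)
  push_cast at hphase
  linarith

lemma exists_isTopDegree_isBottomDegree_of_mem_P (hhom : HasTopBottomHoms t B)
    (hB : ∀ E ∈ B, t.bounded E) {φ : ℝ} {E : D} (hE : E ∈ σ.P φ) (hE₀ : ¬ IsZero E) :
    ∃ n, IsTopDegree t E n ∧ IsBottomDegree t E n := by
  obtain ⟨b, hb⟩ := exists_isTopDegree (hB E (σ.P_le φ hE)) hE₀
  obtain ⟨a, ha⟩ := exists_isBottomDegree (hB E (σ.P_le φ hE)) hE₀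
  have hba : b ≤ a := by
    exact_mod_cast (add_le_add_iff_left φ).1
      (σ.phase_add_top_le_phase_add_bottom hhom hE hE hb ha)
  have hab : a ≤ b := not_lt.1 fun hlt =>
    have hLE : t.IsLE E b := hb.1
    have hGE : t.IsGE E a := ha.1
    hE₀ (t.isZero E b a hlt)
  exact ⟨b, hb, hab.antisymm hba ▸ ha⟩

lemma exists_phase_add_degree_eq (hhom : HasTopBottomHoms t B) (hB : ∀ E ∈ B, t.bounded E) :
    ∃ φ₀ : ℝ, ∀ φ, ∀ E ∈ σ.P φ, ¬ IsZero E →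
      ∃ n : ℤ, t.IsLE E n ∧ t.IsGE E n ∧ φ + n = φ₀ := by
  by_cases hex : ∃ (φ : ℝ) (E : D), E ∈ σ.P φ ∧ ¬ IsZero E
  · obtain ⟨ψ, F, hF, hF₀⟩ := hex
    obtain ⟨m, hFtop, hFbot⟩ := σ.exists_isTopDegree_isBottomDegree_of_mem_P hhom hB hF hF₀
    refine ⟨ψ + m, fun φ E hE hE₀ => ?_⟩
    obtain ⟨n, hEtop, hEbot⟩ := σ.exists_isTopDegree_isBottomDegree_of_mem_P hhom hB hE hE₀
    exact ⟨n, hEtop.1, hEbot.1, le_antisymm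
      (σ.phase_add_top_le_phase_add_bottom hhom hE hF hEtop hFbot)
      (σ.phase_add_top_le_phase_add_bottom hhom hF hE hFtop hEbot)⟩
  · exact ⟨0, fun φ E hE hE₀ => absurd ⟨φ, E, hE, hE₀⟩ hex⟩

theorem exists_phase_mem_P_of_isLE_of_isGE (hhom : HasTopBottomHoms t B)
    (hB : ∀ E ∈ B, t.bounded E) :
    ∃ φ₀ : ℝ, ∀ E ∈ B, ∀ n : ℤ, t.IsLE E n → t.IsGE E n → E ∈ σ.P (φ₀ - n) := by
  obtain ⟨φ₀, hP⟩ := σ.exists_phase_add_degree_eq hhom hB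
  refine ⟨φ₀, fun E hE n hLE hGE => ?_⟩
  by_cases hE₀ : IsZero E
  · exact σ.P_zero _ E hE₀
  obtain ⟨T, φ, d, hT, ⟨e⟩, h₁, h₃P, h₃, h₃LE, h₃GE, hd⟩ :=
    (σ.s4 E hE hE₀).exists_truncation_triangle hE₀ hP
  obtain ⟨hiso, rfl⟩ := isIso_mor₂_and_eq_of_isLE_of_isGE hT h₁
    (t.isLE_of_iso e.symm n) (t.isGE_of_iso e.symm n) h₃LE h₃GE h₃
  rw [← eq_sub_of_add_eq hd]
  exact σ.P_iso _ _ _ h₃P ⟨(asIso T.mor₂).symm ≪≫ e⟩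

end StabilityConditionOn

end Slicing

section LocalRing

lemma nonempty_linearEquiv_of_isSimpleModule (R S T : Type*) [CommRing R] [IsLocalRing R]
    [AddCommGroup S] [Module R S] [AddCommGroup T] [Module R T] [IsSimpleModule R S]
    [IsSimpleModule R T] : Nonempty (S ≃ₗ[R] T) := by
  obtain ⟨I, hI, ⟨eS⟩⟩ := isSimpleModule_iff_quot_maximal.1 ‹IsSimpleModule R S›
  obtain ⟨J, hJ, ⟨eT⟩⟩ := isSimpleModule_iff_quot_maximal.1 ‹IsSimpleModule R T›
  obtain rfl : I = J := (IsLocalRing.eq_maximalIdeal hI).trans (IsLocalRing.eq_maximalIdeal hJ).symm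
  exact ⟨eS.trans eT.symm⟩

lemma exists_isSimpleModule_quotient (R M : Type*) [Ring R] [AddCommGroup M] [Module R M]
    [Module.Finite R M] [Nontrivial M] : ∃ P : Submodule R M, IsSimpleModule R (M ⧸ P) := by
  obtain ⟨P, hP⟩ := IsCoatomic.exists_coatom (Submodule R M)
  exact ⟨P, isSimpleModule_iff_isCoatom.2 hP⟩

lemma exists_isSimpleModule_submodule (R N : Type*) [Ring R] [IsArtinianRing R] [AddCommGroup N]
    [Module R N] [Nontrivial N] : ∃ S : Submodule R N, IsSimpleModule R S := by
  obtain ⟨x, hx⟩ := exists_ne (0 : N)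
  have : Nontrivial (R ∙ x) := Submodule.nontrivial_span_singleton hx
  obtain ⟨S, hS⟩ := IsAtomic.exists_atom (Submodule R (R ∙ x))
  have hSsimple : IsSimpleModule R S := isSimpleModule_iff_isAtom.2 hS
  exact ⟨S.map (R ∙ x).subtype, IsSimpleModule.congr
    (Submodule.equivMapOfInjective _ (R ∙ x).subtype_injective S).symm⟩

lemma exists_linearMap_ne_zero (R M N : Type*) [CommRing R] [IsArtinianRing R] [IsLocalRing R]
    [AddCommGroup M] [Module R M] [Module.Finite R M] [Nontrivial M] [AddCommGroup N] [Module R N]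
    [Nontrivial N] : ∃ f : M →ₗ[R] N, f ≠ 0 := by
  obtain ⟨P, hP⟩ := exists_isSimpleModule_quotient R M
  obtain ⟨S, hS⟩ := exists_isSimpleModule_submodule R N
  obtain ⟨e⟩ := nonempty_linearEquiv_of_isSimpleModule R (M ⧸ P) S
  have := IsSimpleModule.nontrivial R (M ⧸ P)
  obtain ⟨m, hm⟩ := exists_ne (0 : M ⧸ P)
  obtain ⟨m, rfl⟩ := P.mkQ_surjective m
  exact ⟨S.subtype ∘ₗ e.toLinearMap ∘ₗ P.mkQ, fun h => hm (by simpa using LinearMap.congr_fun h m)⟩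

end LocalRing

section DerivedCategory

open DerivedCategory.TStructure

lemma epi_homologyFunctor_map_truncGEπ {C : Type u} [Category.{v} C] [Abelian C]
    [HasDerivedCategory.{w} C] (E : DerivedCategory C) (n : ℤ) :
    Epi ((homologyFunctor C n).map ((t.truncGEπ n).app E)) := by
  have hzero : IsZero ((homologyFunctor C (n + 1)).obj ((t.truncLT n).obj E)) :=
    isZero_of_isLE _ (n - 1) (n + 1) (by lia)
  exact (HomologySequence.epi_homologyMap_mor₂_iff _ (t.triangleLTGE_distinguished n E) n
    (n + 1)).2 (hzero.eq_of_tgt _ _)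

variable {R : Type u} [CommRing R] [HasDerivedCategory.{w} (ModuleCat.{u} R)]

lemma bounded_of_mem_DbCoh {E : DerivedCategory (ModuleCat.{u} R)} (hE : E ∈ DbCoh R) :
    t.bounded E := by
  obtain ⟨⟨a, b, hab⟩, -⟩ := hE
  exact ⟨⟨a, (isGE_iff E a).2 fun i hi => hab i (.inl hi)⟩,
    ⟨b, (isLE_iff E b).2 fun i hi => hab i (.inr hi)⟩⟩

lemma isZero_singleFunctor_obj_iff_subsingleton (M : ModuleCat.{u} R) (n : ℤ) :
    IsZero ((singleFunctor (ModuleCat.{u} R) n).obj M) ↔ Subsingleton M := by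
  rw [← ModuleCat.isZero_iff_subsingleton, IsZero.iff_id_eq_zero, IsZero.iff_id_eq_zero,
    ← (singleFunctor (ModuleCat.{u} R) n).map_id M, Functor.map_eq_zero_iff]

lemma degZero_mem_DbCoh (M : ModuleCat.{u} R) [Module.Finite R M] : degZero R M ∈ DbCoh R := by
  refine ⟨⟨0, 0, ?_⟩, fun i => ?_⟩
  · rintro i (hi | hi)
    · exact isZero_of_isGE _ 0 i hi
    · exact isZero_of_isLE _ 0 i hi
  · obtain hi | rfl := ne_or_eq i 0
    · have hzero : IsZero ((homologyFunctor (ModuleCat.{u} R) i).obj (degZero R M)) :=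
        hi.lt_or_gt.elim (fun h => isZero_of_isGE _ 0 i h) fun h => isZero_of_isLE _ 0 i h
      have := ModuleCat.subsingleton_of_isZero hzero
      infer_instance
    · exact Module.Finite.equiv (M := M)
        ((singleFunctorCompHomologyFunctorIso (ModuleCat.{u} R) 0).app M).symm.toLinearEquiv

lemma finite_homologyFunctor_obj_truncGE (E : DerivedCategory (ModuleCat.{u} R)) (n : ℤ)
    [Module.Finite R ((homologyFunctor (ModuleCat.{u} R) n).obj E)] :
    Module.Finite R ((homologyFunctor (ModuleCat.{u} R) n).obj ((t.truncGE n).obj E)) :=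
  Module.Finite.of_surjective (M := (homologyFunctor (ModuleCat.{u} R) n).obj E)
    ((homologyFunctor (ModuleCat.{u} R) n).map ((t.truncGEπ n).app E)).hom
    ((ModuleCat.epi_iff_surjective _).1 (epi_homologyFunctor_map_truncGEπ E n))

lemma hasTopBottomHoms_DbCoh [IsArtinianRing R] [IsLocalRing R] :
    HasTopBottomHoms t (DbCoh R) := by
  intro E F hE _ n hEn hFn
  have hEle : E.IsLE n := hEn.1
  have hFge : F.IsGE n := hFn.1
  obtain ⟨M, ⟨eM⟩⟩ := exists_iso_singleFunctor_obj_of_isGE_of_isLE ((t.truncGE n).obj E) n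
  obtain ⟨N, ⟨eN⟩⟩ := exists_iso_singleFunctor_obj_of_isGE_of_isLE ((t.truncLE n).obj F) n
  have hM₀ : Nontrivial M := by
    rw [← not_subsingleton_iff_nontrivial, ← isZero_singleFunctor_obj_iff_subsingleton M n]
    exact fun h => hEn.not_isZero_truncGE (h.of_iso eM)
  have hN₀ : Nontrivial N := by
    rw [← not_subsingleton_iff_nontrivial, ← isZero_singleFunctor_obj_iff_subsingleton N n]
    exact fun h => hFn.not_isZero_truncLE (h.of_iso eN)
  have hM : Module.Finite R M := by
    have := hE.2 n
    have := finite_homologyFunctor_obj_truncGE E n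
    exact Module.Finite.equiv (N := M) ((homologyFunctor (ModuleCat.{u} R) n).mapIso eM ≪≫
      (singleFunctorCompHomologyFunctorIso (ModuleCat.{u} R) n).app M).toLinearEquiv
  obtain ⟨f, hf⟩ := exists_linearMap_ne_zero R M N
  refine ⟨_, truncGEπ_comp_comp_truncLEι_ne_zero hEle hFge
    (g := eM.hom ≫ (singleFunctor _ n).map (ModuleCat.ofHom f) ≫ eN.inv) ?_⟩
  rwa [Ne, Preadditive.IsIso.comp_left_eq_zero, Preadditive.IsIso.comp_right_eq_zero,
    Functor.map_eq_zero_iff, ModuleCat.hom_ext_iff]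

end DerivedCategory

theorem stmt8_general (R : Type u) [CommRing R] [IsArtinianRing R] [IsLocalRing R]
    [HasDerivedCategory.{w} (ModuleCat.{u} R)] (σ : StabilityConditionOn (DbCoh R)) :
    ∃ φ₀ : ℝ, ∀ M : ModuleCat.{u} R, Module.Finite R M → Nontrivial M →
      σ.IsSemistable φ₀ (degZero R M) := by
  obtain ⟨φ₀, hmem⟩ :=
    σ.exists_phase_mem_P_of_isLE_of_isGE hasTopBottomHoms_DbCoh fun _ => bounded_of_mem_DbCoh
  refine ⟨φ₀, fun M _ _ => ⟨?_, ?_⟩⟩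
  · simpa using hmem _ (degZero_mem_DbCoh M) 0 inferInstance inferInstance
  · rw [isZero_singleFunctor_obj_iff_subsingleton]
    exact not_subsingleton M

/-- For any stability condition `σ` on `D^b(mod R)`, `R` an Artinian local commutative
ring, having the Jordan–Hölder property, there is a phase `φ₀` such that every nonzero
finitely generated `R`-module, placed in degree `0`, lies in `P φ₀`; in particular
every nonzero finitely generated `R`-module is `σ`-semistable and all of them have the
same phase. -/
theorem stmt8 (R : Type u) [CommRing R] [IsArtinianRing R] [IsLocalRing R]
    [HasDerivedCategory.{w} (ModuleCat.{u} R)]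
    (σ : StabilityConditionOn (DbCoh R)) (hJH : σ.HasJHProperty) :
    ∃ φ₀ : ℝ, ∀ M : ModuleCat.{u} R, Module.Finite R M → Nontrivial M →
      degZero R M ∈ σ.P φ₀ ∧ σ.IsSemistable φ₀ (degZero R M) := by
  obtain ⟨φ₀, h⟩ := stmt8_general R σ
  exact ⟨φ₀, fun M hfin hM => ⟨(h M hfin hM).1, h M hfin hM⟩⟩
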